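/- For every integer n ≥ 0 and every real λ > 0, G_{2,n}(λ) = n^{−n} · λ^n · e^{n/λ} · Γ(n+1, n/λ), where Γ(a, z) := ∫_z^∞ t^{a−1} e^{−t} dt is the upper incomplete gamma function. Moreover, for every integer n ≥ 1, G_{2,n}(1) = √(π/2) · √n + O(1); that is, there exists a constant C > 0 such that |G_{2,n}(1) − √(π/2) · √n| ≤ C for all n ≥ 1. -/

import Mathlib

/-!
Integrating by parts repeatedly, `∫_z^∞ t^n e^{-t} dt = e^{-z} ∑_{j ≤ n} (n!/j!) z^j`; at `z = n/λ`
and after the reflection `j = n - m` this is the first claim.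

For `λ = 1` the substitution `t = n (1 + x)` gives `G_{2,n}(1) = n ∫_0^∞ ((1 + x) e^{-x})^n dx`,
and in fact `0 ≤ G_{2,n}(1) - √(π n / 2) ≤ 1`.

* Lower bound: `log (1 + x) ≥ x - x²/2` for `x ≥ 0`, so the integrand is at least `e^{-n x²/2}`,
  whose integral is half a Gaussian integral.
* Upper bound: substitute `x = y + y²/2`. As `1 + y + y²/2 ≤ e^y`, the integrand is at most
  `e^{-n y²/2}`, while `dx = (1 + y) dy`. Hence
  `G_{2,n}(1) ≤ n ∫_0^∞ (1 + y) e^{-n y²/2} dy = √(π n / 2) + 1`.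
-/

open Finset

/-- The polynomial `G_{k,n}(λ) = ∑_{m=0}^n (n!/(n^m (n-m)!)) C(m+k-2, k-2) λ^m`. -/
noncomputable def Gpoly (k n : ℕ) (l : ℝ) : ℝ :=
  ∑ m ∈ Finset.range (n + 1),
    (Nat.factorial n : ℝ) / ((n : ℝ) ^ m * (Nat.factorial (n - m) : ℝ)) *
      (Nat.choose (m + k - 2) (k - 2) : ℝ) * l ^ m

/-- Upper incomplete gamma function `Γ(a, z) = ∫_z^∞ t^{a-1} e^{-t} dt`. -/
noncomputable def uGamma (a z : ℝ) : ℝ :=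
  ∫ t in Set.Ioi z, t ^ (a - 1) * Real.exp (-t)

open MeasureTheory Filter Topology

/-! ### The incomplete gamma function at integers -/

/-- The polynomial `∑_{j ≤ n} (n!/j!) z^j`, see `expPoly_eq_sum`, defined by the recursion that
integration by parts produces. -/
noncomputable def expPoly : ℕ → ℝ → ℝ
  | 0, _ => 1
  | n + 1, z => (n + 1) * expPoly n z + z ^ (n + 1)

lemma expPoly_eq_sum (n : ℕ) (z : ℝ) :
    expPoly n z = ∑ j ∈ Finset.range (n + 1),
      (Nat.factorial n : ℝ) / (Nat.factorial j : ℝ) * z ^ j := by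
  induction n with
  | zero => simp [expPoly]
  | succ n ih =>
    rw [expPoly, ih, Finset.sum_range_succ _ (n + 1), Finset.mul_sum]
    congr 1
    · refine Finset.sum_congr rfl fun j _ => ?_
      rw [Nat.factorial_succ]
      push_cast
      ring
    · rw [div_self (by positivity), one_mul]

lemma hasDerivAt_expPoly (n : ℕ) (t : ℝ) :
    HasDerivAt (fun t => -(expPoly n t * Real.exp (-t))) (t ^ n * Real.exp (-t)) t := by
  have he : HasDerivAt (fun t : ℝ => Real.exp (-t)) (-Real.exp (-t)) t := by
    simpa using (hasDerivAt_neg t).exp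
  induction n with
  | zero =>
    refine (he.neg.congr_deriv (by simp)).congr_of_eventuallyEq (Eventually.of_forall fun s => ?_)
    simp [expPoly]
  | succ n ih =>
    have h := (ih.const_mul ((n : ℝ) + 1)).sub ((hasDerivAt_pow (n + 1) t).mul he)
    refine (h.congr_deriv ?_).congr_of_eventuallyEq (Eventually.of_forall fun s => ?_)
    · simp only [Nat.add_sub_cancel]
      push_cast
      ring
    · simp only [expPoly, Pi.sub_apply, Pi.mul_apply]
      ring

lemma tendsto_expPoly (n : ℕ) :
    Tendsto (fun t => -(expPoly n t * Real.exp (-t))) atTop (𝓝 0) := by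
  induction n with
  | zero => simpa [expPoly] using (Real.tendsto_pow_mul_exp_neg_atTop_nhds_zero 0).neg
  | succ n ih =>
    have h := (ih.const_mul ((n : ℝ) + 1)).sub
      (Real.tendsto_pow_mul_exp_neg_atTop_nhds_zero (n + 1))
    simp only [mul_zero, sub_zero] at h
    refine h.congr fun s => ?_
    simp only [expPoly]
    ring

lemma integrableOn_pow_mul_exp (n : ℕ) {z : ℝ} (hz : 0 ≤ z) :
    IntegrableOn (fun t : ℝ => t ^ n * Real.exp (-t)) (Set.Ioi z) := by
  refine integrableOn_Ioi_deriv_of_nonneg' (fun x _ => hasDerivAt_expPoly n x) (fun x hx => ?_)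
    (tendsto_expPoly n)
  have : 0 < x := hz.trans_lt hx
  positivity

lemma integral_pow_mul_exp (n : ℕ) {z : ℝ} (hz : 0 ≤ z) :
    ∫ t in Set.Ioi z, t ^ n * Real.exp (-t) = expPoly n z * Real.exp (-z) := by
  rw [integral_Ioi_of_hasDerivAt_of_nonneg' (fun x _ => hasDerivAt_expPoly n x) (fun x hx => ?_)
    (tendsto_expPoly n)]
  · ring
  · have : 0 < x := hz.trans_lt hx
    positivity

lemma uGamma_natCast_add_one (n : ℕ) (z : ℝ) :
    uGamma ((n : ℝ) + 1) z = ∫ t in Set.Ioi z, t ^ n * Real.exp (-t) := by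
  simp [uGamma]

lemma Gpoly_two_eq_expPoly (n : ℕ) {l : ℝ} (hl : 0 < l) :
    Gpoly 2 n l = ((n : ℝ) ^ n)⁻¹ * l ^ n * expPoly n ((n : ℝ) / l) := by
  rcases Nat.eq_zero_or_pos n with rfl | hn
  · simp [Gpoly, expPoly]
  have hn' : (0 : ℝ) < n := by exact_mod_cast hn
  rw [expPoly_eq_sum, Gpoly, ← Finset.sum_range_reflect, Finset.mul_sum]
  refine Finset.sum_congr rfl fun j hj => ?_
  have hj' : j ≤ n := by
    have := Finset.mem_range.mp hj
    omega
  obtain ⟨m, rfl⟩ := Nat.exists_eq_add_of_le hj'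
  have e1 : j + m + 1 - 1 - j = m := by omega
  have e2 : j + m - m = j := by omega
  rw [e1, e2]
  simp only [Nat.sub_self, Nat.choose_zero_right, Nat.cast_one, mul_one]
  have hf : (Nat.factorial j : ℝ) ≠ 0 := by positivity
  generalize ((j + m : ℕ) : ℝ) = N at *
  rw [pow_add N, pow_add l, div_pow]
  field_simp

lemma Gpoly_two_eq_uGamma (n : ℕ) {l : ℝ} (hl : 0 < l) :
    Gpoly 2 n l =
      (((n : ℝ) ^ n)⁻¹ * l ^ n * Real.exp ((n : ℝ) / l)) *
        uGamma ((n : ℝ) + 1) ((n : ℝ) / l) := by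
  rw [uGamma_natCast_add_one, integral_pow_mul_exp n (by positivity), Gpoly_two_eq_expPoly n hl,
    Real.exp_neg]
  have := (Real.exp_pos ((n : ℝ) / l)).ne'
  field_simp

/-! ### Bounds at `λ = 1` -/

lemma image_affine_Ioi {a : ℝ} (ha : 0 < a) :
    (fun x : ℝ => a * (1 + x)) '' Set.Ioi 0 = Set.Ioi a := by
  ext t
  simp only [Set.mem_image, Set.mem_Ioi]
  constructor
  · rintro ⟨x, hx, rfl⟩
    nlinarith
  · intro ht
    refine ⟨t / a - 1, ?_, by field_simp; ring⟩
    rw [sub_pos, lt_div_iff₀ ha]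
    linarith

lemma image_quadratic_Ioi :
    (fun y : ℝ => y + y ^ 2 / 2) '' Set.Ioi 0 = Set.Ioi 0 := by
  ext x
  simp only [Set.mem_image, Set.mem_Ioi]
  constructor
  · rintro ⟨y, hy, rfl⟩
    positivity
  · intro hx
    refine ⟨√(1 + 2 * x) - 1, ?_, ?_⟩
    · rw [sub_pos, Real.lt_sqrt (by norm_num)]
      linarith
    · have := Real.sq_sqrt (show 0 ≤ 1 + 2 * x by positivity)
      nlinarith

/-- The integrand left after the substitution `t = n (1 + x)` in `t ^ n * exp (-t)`. -/
lemma affine_integrand (n : ℕ) (x : ℝ) :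
    |(n : ℝ)| • (((n : ℝ) * (1 + x)) ^ n * Real.exp (-((n : ℝ) * (1 + x)))) =
      ((n : ℝ) ^ n * Real.exp (-(n : ℝ)) * n) * ((1 + x) * Real.exp (-x)) ^ n := by
  have e : Real.exp (-((n : ℝ) * (1 + x))) = Real.exp (-(n : ℝ)) * Real.exp (-x) ^ n := by
    rw [← Real.exp_nat_mul, ← Real.exp_add]
    congr 1
    ring
  rw [e, Nat.abs_cast, smul_eq_mul, mul_pow, mul_pow]
  ring

lemma hasDerivWithinAt_affine (n : ℕ) (s : Set ℝ) (x : ℝ) :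
    HasDerivWithinAt (fun x : ℝ => (n : ℝ) * (1 + x)) n s x := by
  simpa using (((hasDerivAt_id x).const_add 1).const_mul (n : ℝ)).hasDerivWithinAt

lemma injOn_affine {n : ℕ} (hn : 1 ≤ n) (s : Set ℝ) :
    Set.InjOn (fun x : ℝ => (n : ℝ) * (1 + x)) s := by
  have hn' : (n : ℝ) ≠ 0 := by positivity
  intro x _ y _ h
  simpa [hn'] using h

lemma integrableOn_scaled {n : ℕ} (hn : 1 ≤ n) :
    IntegrableOn (fun x : ℝ => ((1 + x) * Real.exp (-x)) ^ n) (Set.Ioi 0) := by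
  have hn' : (0 : ℝ) < n := by exact_mod_cast hn
  have h := integrableOn_pow_mul_exp n hn'.le
  rw [← image_affine_Ioi hn', integrableOn_image_iff_integrableOn_abs_deriv_smul measurableSet_Ioi
    (fun x _ => hasDerivWithinAt_affine n _ x) (injOn_affine hn _)] at h
  simp only [affine_integrand] at h
  have hc : (n : ℝ) ^ n * Real.exp (-(n : ℝ)) * n ≠ 0 := by positivity
  refine (h.const_mul ((n : ℝ) ^ n * Real.exp (-(n : ℝ)) * n)⁻¹).congr
    (Eventually.of_forall fun x => ?_)
  simp only
  rw [inv_mul_cancel_left₀ hc]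

lemma Gpoly_two_one_eq_integral {n : ℕ} (hn : 1 ≤ n) :
    Gpoly 2 n 1 = n * ∫ x in Set.Ioi (0 : ℝ), ((1 + x) * Real.exp (-x)) ^ n := by
  have hn' : (0 : ℝ) < n := by exact_mod_cast hn
  have h : ∫ t in Set.Ioi (n : ℝ), t ^ n * Real.exp (-t) =
      ((n : ℝ) ^ n * Real.exp (-(n : ℝ)) * n) *
        ∫ x in Set.Ioi (0 : ℝ), ((1 + x) * Real.exp (-x)) ^ n := by
    rw [← image_affine_Ioi hn', integral_image_eq_integral_abs_deriv_smul measurableSet_Ioi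
      (fun x _ => hasDerivWithinAt_affine n _ x) (injOn_affine hn _)]
    simp only [affine_integrand]
    rw [integral_const_mul]
  rw [Gpoly_two_eq_uGamma n one_pos, uGamma_natCast_add_one, div_one, h, Real.exp_neg]
  have := (Real.exp_pos (n : ℝ)).ne'
  field_simp
  simp

lemma integral_scaled_eq_quadratic (n : ℕ) :
    ∫ x in Set.Ioi (0 : ℝ), ((1 + x) * Real.exp (-x)) ^ n =
      ∫ y in Set.Ioi (0 : ℝ), (1 + y) *
        ((1 + (y + y ^ 2 / 2)) * Real.exp (-(y + y ^ 2 / 2))) ^ n := by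
  have hd : ∀ y ∈ Set.Ioi (0 : ℝ),
      HasDerivWithinAt (fun y : ℝ => y + y ^ 2 / 2) (1 + y) (Set.Ioi 0) y := fun y _ => by
    have h := (hasDerivAt_id y).add ((hasDerivAt_pow 2 y).div_const 2)
    refine (h.congr_deriv ?_).hasDerivWithinAt
    simp
  have hi : Set.InjOn (fun y : ℝ => y + y ^ 2 / 2) (Set.Ioi 0) := by
    intro x hx y hy h
    have hx' : 0 < x := hx
    have hy' : 0 < y := hy
    have h' : (x - y) * (1 + (x + y) / 2) = 0 := by
      simp only at h
      linear_combination h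
    rcases mul_eq_zero.mp h' with h0 | h0
    · linarith
    · linarith
  conv_lhs => rw [← image_quadratic_Ioi]
  rw [integral_image_eq_integral_abs_deriv_smul measurableSet_Ioi hd hi]
  refine setIntegral_congr_fun measurableSet_Ioi fun y hy => ?_
  have hy' : 0 < y := hy
  simp only [smul_eq_mul]
  rw [abs_of_pos (by linarith)]

lemma exp_neg_sq_le {x : ℝ} (hx : 0 ≤ x) :
    Real.exp (-(x ^ 2 / 2)) ≤ (1 + x) * Real.exp (-x) := by
  have h1 : x - x ^ 2 / 2 ≤ Real.log (1 + x) := by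
    refine le_trans ?_ (Real.le_log_one_add_of_nonneg hx)
    rw [le_div_iff₀ (by positivity)]
    nlinarith [pow_nonneg hx 3]
  have h2 : Real.exp (x - x ^ 2 / 2) ≤ 1 + x := by
    rwa [← Real.le_log_iff_exp_le (by positivity)]
  calc Real.exp (-(x ^ 2 / 2)) = Real.exp (x - x ^ 2 / 2) * Real.exp (-x) := by
        rw [← Real.exp_add]
        congr 1
        ring
    _ ≤ _ := by gcongr

lemma quadratic_le_exp_neg_sq {y : ℝ} (hy : 0 ≤ y) :
    (1 + (y + y ^ 2 / 2)) * Real.exp (-(y + y ^ 2 / 2)) ≤ Real.exp (-(y ^ 2 / 2)) := by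
  calc (1 + (y + y ^ 2 / 2)) * Real.exp (-(y + y ^ 2 / 2))
      ≤ Real.exp y * Real.exp (-(y + y ^ 2 / 2)) := by
        gcongr
        linarith [Real.quadratic_le_exp_of_nonneg hy]
    _ = _ := by
        rw [← Real.exp_add]
        congr 1
        ring

lemma exp_neg_sq_pow (n : ℕ) (x : ℝ) :
    Real.exp (-(x ^ 2 / 2)) ^ n = Real.exp (-((n : ℝ) / 2) * x ^ 2) := by
  rw [← Real.exp_nat_mul]
  congr 1
  ring

lemma integral_mul_exp_neg_mul_sq {b : ℝ} (hb : 0 < b) :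
    ∫ y in Set.Ioi (0 : ℝ), y * Real.exp (-b * y ^ 2) = (2 * b)⁻¹ := by
  have h := integral_mul_cexp_neg_mul_sq (b := (b : ℂ)) (by simpa using hb)
  apply Complex.ofReal_injective
  rw [← integral_complex_ofReal]
  push_cast
  exact h

lemma mul_gaussian_Ioi {n : ℕ} (hn : 1 ≤ n) :
    (n : ℝ) * ∫ x in Set.Ioi (0 : ℝ), Real.exp (-((n : ℝ) / 2) * x ^ 2) =
      √(Real.pi / 2) * √(n : ℝ) := by
  have hn' : (0 : ℝ) < n := by exact_mod_cast hn
  have e : Real.pi / ((n : ℝ) / 2) = 2 ^ 2 * (Real.pi / 2) / n := by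
    field_simp
  rw [integral_gaussian_Ioi, e, Real.sqrt_div (by positivity), Real.sqrt_mul (by positivity),
    Real.sqrt_sq (by norm_num)]
  have hs : √(n : ℝ) ≠ 0 := by positivity
  field_simp
  rw [Real.sq_sqrt hn'.le]

lemma Gpoly_two_one_lower {n : ℕ} (hn : 1 ≤ n) :
    √(Real.pi / 2) * √(n : ℝ) ≤ Gpoly 2 n 1 := by
  rw [← mul_gaussian_Ioi hn, Gpoly_two_one_eq_integral hn]
  refine mul_le_mul_of_nonneg_left ?_ (Nat.cast_nonneg n)
  refine integral_mono_of_nonneg (Eventually.of_forall fun x => (Real.exp_pos _).le)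
    (integrableOn_scaled hn) ?_
  filter_upwards [ae_restrict_mem measurableSet_Ioi] with x hx
  rw [← exp_neg_sq_pow]
  exact pow_le_pow_left₀ (Real.exp_pos _).le (exp_neg_sq_le (le_of_lt hx)) n

lemma Gpoly_two_one_upper {n : ℕ} (hn : 1 ≤ n) :
    Gpoly 2 n 1 ≤ √(Real.pi / 2) * √(n : ℝ) + 1 := by
  have hn' : (0 : ℝ) < n := by exact_mod_cast hn
  have hb : (0 : ℝ) < (n : ℝ) / 2 := by positivity
  have i1 := (integrable_exp_neg_mul_sq hb).integrableOn (s := Set.Ioi 0)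
  have i2 := (integrable_mul_exp_neg_mul_sq hb).integrableOn (s := Set.Ioi 0)
  have hsum : (n : ℝ) * ∫ y in Set.Ioi (0 : ℝ), (Real.exp (-((n : ℝ) / 2) * y ^ 2) +
      y * Real.exp (-((n : ℝ) / 2) * y ^ 2)) = √(Real.pi / 2) * √(n : ℝ) + 1 := by
    rw [integral_add i1 i2, mul_add, mul_gaussian_Ioi hn, integral_mul_exp_neg_mul_sq hb]
    congr 1
    field_simp
  rw [← hsum, Gpoly_two_one_eq_integral hn, integral_scaled_eq_quadratic]
  refine mul_le_mul_of_nonneg_left ?_ (Nat.cast_nonneg n)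
  refine integral_mono_of_nonneg ?_ (i1.add i2) ?_
  · filter_upwards [ae_restrict_mem measurableSet_Ioi] with y hy
    have hy' : 0 < y := hy
    simp only [Pi.zero_apply]
    positivity
  · filter_upwards [ae_restrict_mem measurableSet_Ioi] with y hy
    have hy' : 0 < y := hy
    have h := pow_le_pow_left₀ (by positivity) (quadratic_le_exp_neg_sq hy'.le) n
    rw [exp_neg_sq_pow] at h
    have h2 := mul_le_mul_of_nonneg_left h (show 0 ≤ 1 + y by positivity)
    linarith

theorem Gpoly_two_gamma_form :
    (∀ n : ℕ, ∀ l : ℝ, 0 < l →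
      Gpoly 2 n l =
        (((n : ℝ) ^ n)⁻¹ * l ^ n * Real.exp ((n : ℝ) / l)) *
          uGamma ((n : ℝ) + 1) ((n : ℝ) / l)) ∧
    ∃ C > (0 : ℝ), ∀ n : ℕ, 1 ≤ n →
      |Gpoly 2 n 1 - Real.sqrt (Real.pi / 2) * Real.sqrt (n : ℝ)| ≤ C := by
  refine ⟨fun n l hl => Gpoly_two_eq_uGamma n hl, 1, one_pos, fun n hn => ?_⟩
  rw [abs_le]
  constructor
  · linarith [Gpoly_two_one_lower hn]
  · linarith [Gpoly_two_one_upper hn]
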